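/- Let P_1,…,P_s be distinct points of ℙ²(ℂ) and let d ≥ 3 be an integer such that s ≤ max{⌊(d+3)/2⌋·(d+3−⌊(d+3)/2⌋) − 1, ⌊(d+3)/2⌋²} and such that, for every integer t with 1 ≤ 2t ≤ d + 3 and every nonzero homogeneous polynomial C of degree t in ℂ[x_0,x_1,x_2], at most t(d+3−t) − 2 of the points P_1,…,P_s lie on the plane curve {C = 0}. Then for every point Q ∈ ℙ²(ℂ) \ {P_1,…,P_s} there exists a homogeneous polynomial of degree d in ℂ[x_0,x_1,x_2] vanishing at each of P_1,…,P_s and not vanishing at Q. -/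

import Mathlib

open MvPolynomial

noncomputable section

/-- The projective space `ℙ^N(ℂ)`. -/
abbrev ProjPt (N : ℕ) := Projectivization ℂ (Fin (N + 1) → ℂ)

/-- A (homogeneous) polynomial vanishes at a point of projective space. -/
def VanishesAt {N : ℕ} (F : MvPolynomial (Fin (N + 1)) ℂ) (p : ProjPt N) : Prop :=
  eval p.rep F = 0

/-!
If `Q` cannot be separated from the `P i` in degree `d`, then evaluation at `Q` is a linear
combination of the evaluations at the `P i`. This gives a relation of degree `d` whose support `Γ`
contains `Q`. Multiplying the coefficients of a relation by the values of a form of degree `e`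
lowers its degree by `e`.

A complete intersection of type `(a, b)` supports no nonzero relation of degree at least
`a + b - 2` (Cayley–Bacharach). Let `F` be a form of least degree `t` vanishing on `Γ`, let `G` be
a form of degree `d + 1 - t` vanishing on `Γ`, and let `D` be their greatest common divisor.
Multiplied by `D`, the relation lives on the complete intersection of `F / D` and `G / D`, and its
degree is too large for it not to vanish. So `D` vanishes on `Γ`, by minimality `D` is `F` up to a
unit, and `F` divides `G`.

On the other hand, a relation of degree `k + l` makes the values on `Γ` of the forms of degrees `k`
and `l` orthogonal, so that `h k + h l ≤ #Γ` for the Hilbert function `h` of `Γ`. With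
`k = ⌊(d + 3) / 2⌋` and `l = d - k`, the bound on the number of points gives `t ≤ k`. With
`k = t - 1` and `l = d + 1 - t`, minimality and the divisibility by `F` determine both values and
give `t * (d + 3 - t) ≤ #Γ`. So at least `t * (d + 3 - t) - 1` of the `P i` lie on `F = 0`.
-/

section Factors

variable {σ R : Type*}

lemma order_coe_le_totalDegree [CommSemiring R] {p : MvPolynomial σ R}
    (hp : p ≠ 0) : (p : MvPowerSeries σ R).order ≤ p.totalDegree := by
  obtain ⟨u, hu⟩ := ne_zero_iff.1 hp
  exact (MvPowerSeries.order_le (by rwa [coeff_coe])).trans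
    (mod_cast le_totalDegree (mem_support_iff.2 hu))

lemma isHomogeneous_of_totalDegree_le_order [CommSemiring R] {p : MvPolynomial σ R}
    (hp : (p.totalDegree : ℕ∞) ≤ (p : MvPowerSeries σ R).order) :
    p.IsHomogeneous p.totalDegree := by
  intro u hu
  have hweight : Finsupp.weight 1 u = u.degree :=
    (DFunLike.congr_fun Finsupp.degree_eq_weight_one u).symm
  have horder := hp.trans (MvPowerSeries.order_le (by rwa [coeff_coe]))
  rw [hweight]
  exact (le_totalDegree (mem_support_iff.2 hu)).antisymm (mod_cast horder)

variable [CommRing R] [IsDomain R]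

lemma exists_isHomogeneous_of_mul {p q : MvPolynomial σ R} {n : ℕ}
    (h : (p * q).IsHomogeneous n) (h0 : p * q ≠ 0) :
    ∃ k l, k + l = n ∧ p.IsHomogeneous k ∧ q.IsHomogeneous l := by
  have hp0 := left_ne_zero_of_mul h0
  have hq0 := right_ne_zero_of_mul h0
  have hdeg : p.totalDegree + q.totalDegree = n := by
    rw [← totalDegree_mul_of_isDomain hp0 hq0, h.totalDegree h0]
  have horder : (n : ℕ∞) ≤ (p : MvPowerSeries σ R).order + (q : MvPowerSeries σ R).order := by
    rw [← MvPowerSeries.order_mul, ← coe_mul]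
    refine MvPowerSeries.le_order fun u hu ↦ ?_
    rw [coeff_coe, h.coeff_eq_zero (mod_cast hu.ne)]
  have hp := order_coe_le_totalDegree hp0
  have hq := order_coe_le_totalDegree hq0
  lift (p : MvPowerSeries σ R).order to ℕ using
    ne_top_of_le_ne_top (ENat.natCast_ne_top _) hp with k hk
  lift (q : MvPowerSeries σ R).order to ℕ using
    ne_top_of_le_ne_top (ENat.natCast_ne_top _) hq with l hl
  norm_cast at horder hp hq
  refine ⟨_, _, hdeg, isHomogeneous_of_totalDegree_le_order ?_,
    isHomogeneous_of_totalDegree_le_order ?_⟩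
  · rw [← hk]; norm_cast; omega
  · rw [← hl]; norm_cast; omega

lemma exists_isHomogeneous_of_dvd {l H : MvPolynomial σ R} {m n : ℕ} (hl : l.IsHomogeneous m)
    (hH : H.IsHomogeneous (m + n)) (h : l ∣ H) : ∃ L, L.IsHomogeneous n ∧ H = l * L := by
  obtain ⟨L, rfl⟩ := h
  rcases eq_or_ne (l * L) 0 with h0 | h0
  · exact ⟨0, isHomogeneous_zero _ _ _, by rw [h0, mul_zero]⟩
  obtain ⟨k, j, hkj, hk, hj⟩ := exists_isHomogeneous_of_mul hH h0
  obtain rfl : k = m := hk.inj_right hl (left_ne_zero_of_mul h0)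
  exact ⟨L, by rwa [← Nat.add_left_cancel hkj], rfl⟩

lemma exists_isRelPrime_of_isHomogeneous [UniqueFactorizationMonoid R]
    {F G : MvPolynomial σ R} {a b : ℕ}
    (hF : F.IsHomogeneous a) (hG : G.IsHomogeneous b) (hF0 : F ≠ 0) (hG0 : G ≠ 0) :
    ∃ (D F' G' : MvPolynomial σ R) (e a' b' : ℕ), F = D * F' ∧ G = D * G' ∧
      e + a' = a ∧ e + b' = b ∧ D.IsHomogeneous e ∧ F'.IsHomogeneous a' ∧ G'.IsHomogeneous b' ∧
      IsRelPrime F' G' := by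
  obtain ⟨F', G', D, hrel, rfl, rfl⟩ :=
    UniqueFactorizationMonoid.exists_reduced_factors F hF0 G
  obtain ⟨e, a', hea, hD, hF'⟩ := exists_isHomogeneous_of_mul hF hF0
  obtain ⟨e', b', heb, hD', hG'⟩ := exists_isHomogeneous_of_mul hG hG0
  obtain rfl : e' = e := hD'.inj_right hD (left_ne_zero_of_mul hG0)
  exact ⟨D, F', G', e', a', b', rfl, rfl, hea, heb, hD, hF', hG', hrel⟩

end Factors

section Bezout

open Polynomial in
lemma isCoprime_map_fractionRing_of_isRelPrime {R : Type*} [CommRing R] [IsDomain R]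
    [IsIntegrallyClosed R] {f g : R[X]} (hf : f.Monic) (h : IsRelPrime f g) :
    IsCoprime (f.map (algebraMap R (FractionRing R))) (g.map (algebraMap R (FractionRing R))) := by
  set K := FractionRing R
  have hK : Function.Injective (algebraMap R K) := IsFractionRing.injective R K
  refine IsRelPrime.isCoprime fun p hpf hpg ↦ ?_
  have hp0 : p.leadingCoeff ≠ 0 :=
    leadingCoeff_ne_zero.2 (ne_zero_of_dvd_ne_zero (hf.map _).ne_zero hpf)
  obtain ⟨p', hp'⟩ := IsIntegrallyClosed.eq_map_mul_C_of_dvd K hf hpf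
  have hmonic : p'.Monic := by
    have hlead := congrArg leadingCoeff hp'
    rw [leadingCoeff_mul, leadingCoeff_C] at hlead
    exact monic_of_injective hK (mul_eq_right₀ hp0 |>.1 hlead)
  have hdvd : p'.map (algebraMap R K) ∣ p := ⟨_, hp'.symm⟩
  have hunit : IsUnit p' := h ((map_dvd_map _ hK hmonic).1 (hdvd.trans hpf))
    ((map_dvd_map _ hK hmonic).1 (hdvd.trans hpg))
  rw [← hp']
  exact (hunit.map (mapRingHom (algebraMap R K))).mul (isUnit_C.2 hp0.isUnit)

open Polynomial in
lemma exists_bezout_of_isRelPrime {R : Type*} [CommRing R] [IsDomain R]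
    [IsIntegrallyClosed R] {f g : R[X]} (hf : f.Monic) (h : IsRelPrime f g) :
    ∃ (u v : R[X]) (r : R), r ≠ 0 ∧ u * f + v * g = Polynomial.C r := by
  rcases eq_or_ne f.natDegree 0 with h0 | h0
  · exact ⟨1, 0, 1, one_ne_zero, by simp [eq_one_of_monic_natDegree_zero hf h0]⟩
  obtain ⟨u, v, -, -, huv⟩ :=
    exists_mul_add_mul_eq_C_resultant f g le_rfl le_rfl (Or.inl h0)
  refine ⟨u, v, f.resultant g, fun hr ↦ ?_, by rw [← huv]; ring⟩
  have hK := IsFractionRing.injective R (FractionRing R)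
  have hmap := resultant_map_map f g f.natDegree g.natDegree (algebraMap R (FractionRing R))
  rw [hr, map_zero] at hmap
  apply resultant_ne_zero _ _ (isCoprime_map_fractionRing_of_isRelPrime hf h)
  rwa [natDegree_map_eq_of_injective hK, natDegree_map_eq_of_injective hK]

end Bezout

/-- The restriction of `F` to the line through `p` and `q`, in the affine coordinate `T` of the
point `T p + q`. -/
def restrictLine {σ R : Type*} [CommSemiring R] (p q : σ → R) :
    MvPolynomial σ R →ₐ[R] Polynomial R :=
  aeval fun i ↦ Polynomial.C (p i) * Polynomial.X + Polynomial.C (q i)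

section RestrictLine

variable {σ R : Type*}

lemma homogenize_restrictLine [CommSemiring R] (p q : σ → R) {F : MvPolynomial σ R} {n : ℕ}
    (hF : F.IsHomogeneous n) :
    (restrictLine p q F).homogenize n = aeval (fun i ↦ C (p i) * X 0 + C (q i) * X 1) F := by
  apply Polynomial.homogenize_eq_of_isHomogeneous
  · simpa using hF.aeval _
      fun i ↦ (isHomogeneous_C_mul_X (p i) 0).add (isHomogeneous_C_mul_X (q i) 1)
  · rw [restrictLine, ← AlgHom.comp_apply]
    congr 1
    ext i
    simp

lemma natDegree_restrictLine_le [CommSemiring R] (p q : σ → R) {F : MvPolynomial σ R} {n : ℕ}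
    (hF : F.IsHomogeneous n) : (restrictLine p q F).natDegree ≤ n := by
  simpa [restrictLine] using aeval_natDegree_le F hF.totalDegree_le (n := 1)
    (fun i ↦ Polynomial.C (p i) * Polynomial.X + Polynomial.C (q i))
    fun i ↦ Polynomial.natDegree_linear_le

lemma coeff_restrictLine [CommSemiring R] (p q : σ → R) {F : MvPolynomial σ R} {n : ℕ}
    (hF : F.IsHomogeneous n) : (restrictLine p q F).coeff n = eval p F := by
  have heval : eval ![1, 0] ((restrictLine p q F).homogenize n) =
      (restrictLine p q F).coeff n := by
    rw [Polynomial.homogenize, map_sum, Finset.sum_eq_single (n, 0)]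
    · simp [eval_monomial]
    · rintro ⟨k, l⟩ hkl hne
      have hl : l ≠ 0 := by
        rintro rfl
        simp_all
      simp [eval_monomial, hl]
    · simp
  rw [← heval, homogenize_restrictLine p q hF, aeval_eq_bind₁, ← aeval_eq_eval, aeval_bind₁]
  simp

lemma map_restrictLine {S : Type*} [CommSemiring R] [CommSemiring S] (f : R →+* S)
    (p q : σ → R) (F : MvPolynomial σ R) :
    (restrictLine p q F).map f = restrictLine (f ∘ p) (f ∘ q) (map f F) := by
  induction F using MvPolynomial.induction_on <;> simp_all [restrictLine]

end RestrictLine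

section RestrictGenericLine

variable {σ R : Type*} [CommRing R]

/-- The restriction `F(T p + x)` of `F` to the line joining `p` to the generic point `x`: a
polynomial in `T` whose coefficients are polynomials in the coordinates of `x`. -/
def restrictGenericLine (p : σ → R) : MvPolynomial σ R →+* Polynomial (MvPolynomial σ R) :=
  (restrictLine (C ∘ p) X).toRingHom.comp (map C)

lemma restrictGenericLine_X (p : σ → R) (i : σ) :
    restrictGenericLine p (X i) = Polynomial.C (C (p i)) * Polynomial.X + Polynomial.C (X i) := by
  simp [restrictGenericLine, restrictLine]

lemma restrictGenericLine_C (p : σ → R) (r : R) :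
    restrictGenericLine p (C r) = Polynomial.C (C r) := by
  simp [restrictGenericLine, restrictLine]

lemma map_eval_restrictGenericLine (p q : σ → R) (F : MvPolynomial σ R) :
    (restrictGenericLine p F).map (eval q) = restrictLine p q F := by
  have hC : (eval q).comp C = RingHom.id R := by ext; simp
  simp only [restrictGenericLine, RingHom.comp_apply, AlgHom.toRingHom_eq_coe, RingHom.coe_coe,
    map_restrictLine, map_map, hC, map_id]
  congr 2 <;> (ext i; simp)

/-- The automorphism `x ↦ x + T p`, `T ↦ T` of the ring of polynomials in `x` and `T`. -/
def shear (p : σ → R) : Polynomial (MvPolynomial σ R) →+* Polynomial (MvPolynomial σ R) :=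
  Polynomial.eval₂RingHom (restrictGenericLine p) Polynomial.X

lemma shear_neg_comp_shear (p : σ → R) : (shear (-p)).comp (shear p) = RingHom.id _ := by
  have shear_C (q : σ → R) (r : R) :
      shear q (Polynomial.C (C r)) = Polynomial.C (C r) := by
    simp [shear, restrictGenericLine_C]
  have shear_X (q : σ → R) : shear q Polynomial.X = Polynomial.X := by simp [shear]
  have shear_C_X (q : σ → R) (i : σ) : shear q (Polynomial.C (X i)) =
      Polynomial.C (C (q i)) * Polynomial.X + Polynomial.C (X i) := by
    simp [shear, restrictGenericLine_X]
  refine Polynomial.ringHom_ext' (ringHom_ext (fun r ↦ ?_) fun i ↦ ?_) ?_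
  · simp [shear_C]
  · simp only [RingHom.comp_apply, RingHom.id_apply, shear_C_X, map_add, map_mul, shear_C,
      shear_X, Pi.neg_apply, map_neg]
    ring
  · simp [shear_X]

lemma isRelPrime_C_C [IsDomain R] {F G : R} (hF : F ≠ 0) (h : IsRelPrime F G) :
    IsRelPrime (Polynomial.C F) (Polynomial.C G) := by
  intro D hDF hDG
  have hdeg := Polynomial.natDegree_le_of_dvd hDF (Polynomial.C_ne_zero.2 hF)
  rw [Polynomial.natDegree_C, Nat.le_zero] at hdeg
  obtain ⟨D, rfl⟩ := Polynomial.natDegree_eq_zero.1 hdeg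
  have dvd_of_C_dvd {A : R} (hA : Polynomial.C D ∣ Polynomial.C A) : D ∣ A := by
    simpa using (Polynomial.C_dvd_iff_dvd_coeff D _).1 hA 0
  exact Polynomial.isUnit_C.2 (h (dvd_of_C_dvd hDF) (dvd_of_C_dvd hDG))

lemma isRelPrime_restrictGenericLine [IsDomain R] (p : σ → R) {F G : MvPolynomial σ R} (hF : F ≠ 0)
    (h : IsRelPrime F G) : IsRelPrime (restrictGenericLine p F) (restrictGenericLine p G) := by
  -- The shear maps the constant polynomial `F(x)` in `T` to `F(T p + x)`.
  let e : Polynomial (MvPolynomial σ R) ≃+* Polynomial (MvPolynomial σ R) :=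
    RingEquiv.ofRingHom (shear p) (shear (-p))
      (by simpa using shear_neg_comp_shear (-p)) (shear_neg_comp_shear p)
  have he (H : MvPolynomial σ R) : e.symm (restrictGenericLine p H) = Polynomial.C H := by
    rw [RingEquiv.symm_apply_eq]
    simp [e, shear]
  exact IsRelPrime.of_map e.symm (by simpa only [he] using isRelPrime_C_C hF h)

lemma coeff_restrictGenericLine {F : MvPolynomial σ R} {n : ℕ} (hF : F.IsHomogeneous n)
    (p : σ → R) : (restrictGenericLine p F).coeff n = C (eval p F) := by
  simp only [restrictGenericLine, RingHom.comp_apply, AlgHom.toRingHom_eq_coe, RingHom.coe_coe]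
  rw [coeff_restrictLine _ _ (hF.map C)]
  simp [eval_map, eval₂_comp]

end RestrictGenericLine

section CoprimeRestriction

variable {σ K : Type*} [Field K]

lemma exists_isCoprime_restrictLine {F G : MvPolynomial σ K} {a : ℕ} (hF : F.IsHomogeneous a)
    (h : IsRelPrime F G) {p : σ → K} (hp : eval p F ≠ 0) :
    ∃ r : MvPolynomial σ K, r ≠ 0 ∧ ∀ q, eval q r ≠ 0 →
      IsCoprime (restrictLine p q F) (restrictLine p q G) := by
  have hF0 : F ≠ 0 := by rintro rfl; simp at hp
  set f := restrictGenericLine p (C (eval p F)⁻¹ * F) with hf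
  have hmonic : f.Monic := by
    have hFa : (C (eval p F)⁻¹ * F).IsHomogeneous a := hF.C_mul _
    refine Polynomial.monic_of_natDegree_le_of_coeff_eq_one a
      (natDegree_restrictLine_le _ _ (hFa.map C)) ?_
    rw [hf, coeff_restrictGenericLine hFa]
    simp [hp]
  have hrel : IsRelPrime f (restrictGenericLine p G) := by
    have hunit : IsUnit (C (eval p F)⁻¹ : MvPolynomial σ K) := (inv_ne_zero hp).isUnit.map C
    exact isRelPrime_restrictGenericLine p (by simp_all)
      ((isRelPrime_mul_unit_left_left hunit).2 h)
  obtain ⟨u, v, r, hr, huv⟩ := exists_bezout_of_isRelPrime hmonic hrel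
  refine ⟨r, hr, fun q hq ↦ ?_⟩
  have hq' := congrArg (Polynomial.map (eval q)) huv
  simp only [Polynomial.map_add, Polynomial.map_mul, Polynomial.map_C, hf,
    map_eval_restrictGenericLine, map_mul] at hq'
  have hinv : Polynomial.C (eval q r)⁻¹ * Polynomial.C (eval q r) = 1 := by
    rw [← Polynomial.C_mul, inv_mul_cancel₀ hq, Polynomial.C_1]
  exact ⟨Polynomial.C (eval q r)⁻¹ * (u.map (eval q) * restrictLine p q (C (eval p F)⁻¹)),
    Polynomial.C (eval q r)⁻¹ * v.map (eval q),
    by linear_combination Polynomial.C (eval q r)⁻¹ * hq' + hinv⟩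

end CoprimeRestriction

section LinearForm

variable {σ R : Type*} [Fintype σ] [CommSemiring R]

/-- The linear form with coefficient vector `a`. -/
def linearForm (a : σ → R) : MvPolynomial σ R := ∑ i, C (a i) * X i

lemma isHomogeneous_linearForm (a : σ → R) : (linearForm a).IsHomogeneous 1 :=
  IsHomogeneous.sum _ _ _ fun i _ ↦ isHomogeneous_C_mul_X (a i) i

lemma eval_linearForm (a v : σ → R) : eval v (linearForm a) = a ⬝ᵥ v := by
  simp [linearForm, dotProduct]

lemma restrictLine_linearForm (p q a : σ → R) :
    restrictLine p q (linearForm a) =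
      Polynomial.C (a ⬝ᵥ p) * Polynomial.X + Polynomial.C (a ⬝ᵥ q) := by
  simp only [linearForm, restrictLine, map_sum, map_mul, aeval_X, algHom_C,
    Polynomial.algebraMap_eq, dotProduct, Finset.sum_mul, ← Finset.sum_add_distrib]
  exact Finset.sum_congr rfl fun i _ ↦ by ring

end LinearForm

section LineInPlane

open Matrix

lemma dvd_aeval_sub_aeval {σ R A : Type*} [CommSemiring R] [CommRing A] [Algebra R A] {l : A}
    {f g : σ → A} (h : ∀ i, l ∣ f i - g i) (H : MvPolynomial σ R) :
    l ∣ aeval f H - aeval g H := by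
  let π := Ideal.Quotient.mkₐ R (Ideal.span {l})
  have hπ : (π.comp (aeval f)) = π.comp (aeval g) := by
    ext i
    simpa [π, Ideal.Quotient.mk_eq_mk_iff_sub_mem, Ideal.mem_span_singleton] using h i
  rw [← Ideal.mem_span_singleton, ← Ideal.Quotient.mk_eq_mk_iff_sub_mem]
  exact DFunLike.congr_fun hπ H

variable {R : Type*} [CommRing R] {p q w : Fin 3 → R}

lemma dvd_of_restrictLine_eq_zero (hw : (p ⨯₃ q) ⬝ᵥ w = 1) {H : MvPolynomial (Fin 3) R} {n : ℕ}
    (hH : H.IsHomogeneous n) (h0 : restrictLine p q H = 0) : linearForm (p ⨯₃ q) ∣ H := by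
  -- By Cramer, `x` is congruent to `((q × w) ⬝ x) p + ((w × p) ⬝ x) q` modulo `(p × q) ⬝ x`.
  have hbinary := homogenize_restrictLine p q hH
  rw [h0, Polynomial.homogenize_zero] at hbinary
  have hdvd := dvd_aeval_sub_aeval (R := R) (l := linearForm (p ⨯₃ q)) (f := X)
    (g := fun i ↦ C (p i) * linearForm (q ⨯₃ w) + C (q i) * linearForm (w ⨯₃ p))
    (fun i ↦ ⟨C (w i), ?_⟩) H
  · have hlift : aeval (fun i ↦ C (p i) * linearForm (q ⨯₃ w) + C (q i) * linearForm (w ⨯₃ p)) H =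
        aeval ![linearForm (q ⨯₃ w), linearForm (w ⨯₃ p)]
          (aeval (fun i ↦ C (p i) * X 0 + C (q i) * X 1 : _ → MvPolynomial (Fin 2) R) H) := by
      rw [← AlgHom.comp_apply]
      congr 1
      ext i : 1
      simp
    rwa [hlift, ← hbinary, map_zero, sub_zero, aeval_X_left, AlgHom.id_apply] at hdvd
  · have hwC := congrArg (C : R → MvPolynomial (Fin 3) R) hw
    simp only [cross_apply, dotProduct, Fin.sum_univ_three, linearForm, map_add, map_mul, map_sub,
      cons_val, map_one] at hwC ⊢
    fin_cases i <;> simp only [Fin.zero_eta, Fin.mk_one, Fin.reduceFinMk]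
    · linear_combination (-X 0) * hwC
    · linear_combination (-X 1) * hwC
    · linear_combination (-X 2) * hwC

lemma exists_isHomogeneous_restrictLine_eq (hw : (p ⨯₃ q) ⬝ᵥ w = 1) {f : Polynomial R} {n : ℕ}
    (hf : f.natDegree ≤ n) :
    ∃ H : MvPolynomial (Fin 3) R, H.IsHomogeneous n ∧ restrictLine p q H = f := by
  refine ⟨aeval ![linearForm (q ⨯₃ w), linearForm (w ⨯₃ p)] (f.homogenize n), ?_, ?_⟩
  · have hlinear (i : Fin 2) :
        (![linearForm (q ⨯₃ w), linearForm (w ⨯₃ p)] i).IsHomogeneous 1 := by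
      fin_cases i <;> exact isHomogeneous_linearForm _
    simpa only [one_mul] using (Polynomial.isHomogeneous_homogenize f).aeval _ hlinear
  · have hwp : (q ⨯₃ w) ⬝ᵥ p = 1 := by
      rw [dotProduct_comm, triple_product_permutation, triple_product_permutation,
        dotProduct_comm, hw]
    have hwq : (w ⨯₃ p) ⬝ᵥ q = 1 := by
      rw [dotProduct_comm, triple_product_permutation, dotProduct_comm, hw]
    have hqq : (q ⨯₃ w) ⬝ᵥ q = 0 := by rw [dotProduct_comm, dot_self_cross]
    have hpp : (w ⨯₃ p) ⬝ᵥ p = 0 := by rw [dotProduct_comm, dot_cross_self]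
    conv_rhs => rw [← Polynomial.aeval_homogenize_X_one f hf]
    rw [← AlgHom.comp_apply]
    congr 1
    ext i : 1
    fin_cases i <;> simp [restrictLine_linearForm, hwp, hwq, hqq, hpp]

end LineInPlane

section LineSpan

open Matrix

variable {K : Type*} [Field K]

lemma eval_smul_of_isHomogeneous {σ R : Type*} [CommSemiring R] {F : MvPolynomial σ R} {n : ℕ}
    (hF : F.IsHomogeneous n) (c : R) (v : σ → R) : eval (c • v) F = c ^ n * eval v F := by
  rw [eval_eq, eval_eq, Finset.mul_sum]
  refine Finset.sum_congr rfl fun u hu ↦ ?_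
  simp only [Pi.smul_apply, smul_eq_mul, mul_pow, Finset.prod_mul_distrib,
    Finset.prod_pow_eq_pow_sum, hF.degree_eq_sum_deg_support hu]
  ring

lemma exists_isCoprime_restrictLine_avoiding [Infinite K] {F G : MvPolynomial (Fin 3) K}
    {a : ℕ} (hF : F.IsHomogeneous a) (h : IsRelPrime F G) {p : Fin 3 → K} (hp : eval p F ≠ 0)
    (S : Finset (Fin 3 → K)) (hS : ∀ v ∈ S, v ≠ 0 ∧ eval v F = 0) :
    ∃ q, IsCoprime (restrictLine p q F) (restrictLine p q G) ∧
      ∀ v ∈ S, eval v (linearForm (p ⨯₃ q)) ≠ 0 := by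
  obtain ⟨r, hr, hcoprime⟩ := exists_isCoprime_restrictLine hF h hp
  have hcross (v) (hv : v ∈ S) : v ⨯₃ p ≠ 0 := by
    obtain ⟨hv0, hFv⟩ := hS v hv
    rw [crossProduct_ne_zero_iff_linearIndependent, LinearIndependent.pair_iff' hv0]
    rintro c rfl
    exact hp (by rw [eval_smul_of_isHomogeneous hF, hFv, mul_zero])
  have hform (v) (hv : v ∈ S) : linearForm (v ⨯₃ p) ≠ 0 := by
    intro h0
    refine hcross v hv (dotProduct_eq_zero _ fun u ↦ ?_)
    rw [← eval_linearForm, h0, map_zero]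
  have hprod : r * ∏ v ∈ S, linearForm (v ⨯₃ p) ≠ 0 :=
    mul_ne_zero hr (Finset.prod_ne_zero_iff.2 hform)
  obtain ⟨q, hq⟩ : ∃ q, eval q (r * ∏ v ∈ S, linearForm (v ⨯₃ p)) ≠ 0 := by
    contrapose! hprod
    exact funext fun q ↦ by rw [hprod q, map_zero]
  rw [map_mul, map_prod, mul_ne_zero_iff, Finset.prod_ne_zero_iff] at hq
  refine ⟨q, hcoprime q hq.1, fun v hv ↦ ?_⟩
  rw [eval_linearForm, dotProduct_comm, ← triple_product_permutation, dotProduct_comm,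
    ← eval_linearForm]
  exact hq.2 v hv

open Polynomial in
lemma exists_mul_add_mul_eq_natDegree_le {f g r : K[X]} {b n : ℕ} (hf : f ≠ 0)
    (h : IsCoprime f g) (hg : g.natDegree ≤ b) (hr : r.natDegree ≤ n)
    (hn : f.natDegree + b ≤ n + 1) :
    ∃ u w : K[X], u * f + w * g = r ∧ u.natDegree ≤ n - f.natDegree ∧ w.natDegree ≤ n - b := by
  obtain ⟨x, y, hxy⟩ := h
  set w := (r * y) % f
  set u := r * x + (r * y) / f * g
  have huw : u * f + w * g = r := by
    linear_combination r * hxy + g * EuclideanDomain.div_add_mod (r * y) f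
  have hw : w = 0 ∨ w.natDegree + b ≤ n := by
    refine or_iff_not_imp_left.2 fun hw0 ↦ ?_
    have hlt : w.natDegree < f.natDegree :=
      natDegree_lt_natDegree hw0 (EuclideanDomain.mod_lt (r * y) hf)
    lia
  have hwg : (w * g).natDegree ≤ n := by
    rcases hw with hw | hw
    · simp [hw]
    · exact natDegree_mul_le.trans (by lia)
  refine ⟨u, w, huw, ?_, ?_⟩
  · rcases eq_or_ne u 0 with hu | hu
    · simp [hu]
    have huf : (u * f).natDegree ≤ n := by
      rw [eq_sub_of_add_eq huw]
      exact (natDegree_sub_le _ _).trans (max_le hr hwg)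
    rw [natDegree_mul hu hf] at huf
    lia
  · rcases hw with hw | hw
    · simp [hw]
    · lia

lemma exists_eq_mul_add_mul_add_linearForm_mul {F G H : MvPolynomial (Fin 3) K}
    {a b n : ℕ} {p q : Fin 3 → K} (hF : F.IsHomogeneous a) (hG : G.IsHomogeneous b)
    (hH : H.IsHomogeneous (n + 1)) (hpq : p ⨯₃ q ≠ 0) (hp : eval p F ≠ 0)
    (hcop : IsCoprime (restrictLine p q F) (restrictLine p q G))
    (hab : a + b ≤ n + 2) (ha : a ≤ n + 1) (hb : b ≤ n + 1) :
    ∃ A B L, L.IsHomogeneous n ∧ H = A * F + B * G + linearForm (p ⨯₃ q) * L := by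
  obtain ⟨w, hw⟩ : ∃ w, (p ⨯₃ q) ⬝ᵥ w = 1 := by
    obtain ⟨i, hi⟩ := Function.ne_iff.1 hpq
    exact ⟨Pi.single i ((p ⨯₃ q) i)⁻¹, by simpa using mul_inv_cancel₀ hi⟩
  have hcoeff : (restrictLine p q F).coeff a ≠ 0 := by rwa [coeff_restrictLine p q hF]
  have hdeg : (restrictLine p q F).natDegree = a :=
    Polynomial.natDegree_eq_of_le_of_coeff_ne_zero (natDegree_restrictLine_le p q hF) hcoeff
  obtain ⟨u, v, huv, hu, hv⟩ := exists_mul_add_mul_eq_natDegree_le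
    (by rintro h0; simp [h0] at hcoeff) hcop (natDegree_restrictLine_le p q hG)
    (natDegree_restrictLine_le p q hH) (by lia)
  rw [hdeg] at hu
  obtain ⟨A, hA, rfl⟩ := exists_isHomogeneous_restrictLine_eq hw hu
  obtain ⟨B, hB, rfl⟩ := exists_isHomogeneous_restrictLine_eq hw hv
  have hAF := hA.mul hF
  have hBG := hB.mul hG
  rw [Nat.sub_add_cancel ha] at hAF
  rw [Nat.sub_add_cancel hb] at hBG
  have hrem : (H - (A * F + B * G)).IsHomogeneous (1 + n) := by
    rw [add_comm 1 n]
    exact hH.sub (hAF.add hBG)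
  obtain ⟨L, hL, hHL⟩ := exists_isHomogeneous_of_dvd (isHomogeneous_linearForm (p ⨯₃ q)) hrem
    (dvd_of_restrictLine_eq_zero hw hrem (by simp [huv]))
  exact ⟨A, B, L, hL, by rw [← hHL]; ring⟩

end LineSpan

section Relations

open Projectivization
open scoped LinearAlgebra.Projectivization

variable {σ K : Type*} [Field K]

/-- The weighted points `c` satisfy a linear relation in degree `d`: the combination of point
evaluations with coefficients `c` kills all forms of degree `d`. Forms are evaluated at the chosen
representatives of the points, so the coefficients depend on these representatives. -/
def IsRelation (d : ℕ) (c : ℙ K (σ → K) →₀ K) : Prop :=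
  ∀ H : MvPolynomial σ K, H.IsHomogeneous d → c.sum (fun x r ↦ r * eval x.rep H) = 0

/-- Evaluation at the chosen representative of a point, as a functional on forms of degree `d`. -/
def evalForm (d : ℕ) (x : ℙ K (σ → K)) : Module.Dual K (homogeneousSubmodule σ K d) :=
  (aeval x.rep).toLinearMap ∘ₗ (homogeneousSubmodule σ K d).subtype

lemma evalForm_apply {d : ℕ} (x : ℙ K (σ → K)) (F : homogeneousSubmodule σ K d) :
    evalForm d x F = eval x.rep F.1 := by
  simp [evalForm, aeval_eq_eval]

lemma isRelation_iff_linearCombination_evalForm_eq_zero {d : ℕ} {c : ℙ K (σ → K) →₀ K} :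
    IsRelation d c ↔ Finsupp.linearCombination K (evalForm d) c = 0 := by
  simp [IsRelation, LinearMap.ext_iff, Finsupp.linearCombination_apply, Finsupp.sum,
    evalForm_apply, mem_homogeneousSubmodule]

lemma sum_smul_mul {α : Type*} (f g : α → K) (c : α →₀ K) :
    (f • c).sum (fun x r ↦ r * g x) = c.sum fun x r ↦ r * (f x * g x) := by
  have hsupp : (f • c).support ⊆ c.support := fun x ↦ by
    simp +contextual
  rw [Finsupp.sum_of_support_subset _ hsupp _ (by simp), Finsupp.sum]
  refine Finset.sum_congr rfl fun x _ ↦ ?_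
  simp only [Finsupp.coe_pointwise_smul, Pi.smul_apply', smul_eq_mul]
  ring

lemma IsRelation.eval_smul {c : ℙ K (σ → K) →₀ K} {D : MvPolynomial σ K} {d e : ℕ}
    (hc : IsRelation (e + d) c) (hD : D.IsHomogeneous e) :
    IsRelation d ((fun x : ℙ K (σ → K) ↦ eval x.rep D) • c) := by
  intro H hH
  simpa only [sum_smul_mul, map_mul] using hc _ (hD.mul hH)

lemma exists_linearForm_separating [Fintype σ] {W : Submodule K (σ → K)} {v : σ → K} (hv : v ∉ W) :
    ∃ a : σ → K, eval v (linearForm a) ≠ 0 ∧ ∀ w ∈ W, eval w (linearForm a) = 0 := by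
  classical
  obtain ⟨φ, hφv, hφW⟩ := W.exists_le_ker_of_notMem hv
  refine ⟨(dotProductEquiv K σ).symm φ, ?_⟩
  have heval (w : σ → K) : eval w (linearForm ((dotProductEquiv K σ).symm φ)) = φ w := by
    rw [eval_linearForm, ← dotProductEquiv_apply_apply, LinearEquiv.apply_symm_apply]
  exact ⟨by rwa [heval], fun w hw ↦ by rw [heval]; exact hφW hw⟩

lemma exists_separating_form [Finite σ] {S : Finset (ℙ K (σ → K))} {x : ℙ K (σ → K)}
    (hx : x ∉ S) {n : ℕ} (hn : S.card ≤ n) :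
    ∃ H : MvPolynomial σ K, H.IsHomogeneous n ∧ eval x.rep H ≠ 0 ∧ ∀ y ∈ S, eval y.rep H = 0 := by
  cases nonempty_fintype σ
  have hspan (y) (hy : y ∈ S) : x.rep ∉ K ∙ y.rep := by
    rw [Submodule.mem_span_singleton]
    rintro ⟨r, hr⟩
    have hxy : x = y := by
      rw [← x.mk_rep, ← y.mk_rep, mk_eq_mk_iff']
      exact ⟨r, hr⟩
    exact hx (hxy ▸ hy)
  choose! a hax hay using fun y hy ↦ exists_linearForm_separating (hspan y hy)
  obtain ⟨b, hb, -⟩ :=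
    exists_linearForm_separating (W := ⊥) (x.rep_nonzero ∘ (Submodule.mem_bot K).1)
  refine ⟨(∏ y ∈ S, linearForm (a y)) * linearForm b ^ (n - S.card), ?_, ?_, fun y hy ↦ ?_⟩
  · have h := (IsHomogeneous.prod S _ _ fun y _ ↦ isHomogeneous_linearForm (a y)).mul
      ((isHomogeneous_linearForm b).pow (n - S.card))
    simpa [Nat.add_sub_cancel' hn] using h
  · rw [map_mul, map_prod, map_pow]
    exact mul_ne_zero (Finset.prod_ne_zero_iff.2 hax) (pow_ne_zero _ hb)
  · have hyy : eval y.rep (linearForm (a y)) = 0 := hay y hy _ (Submodule.mem_span_singleton_self _)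
    rw [map_mul, map_prod, Finset.prod_eq_zero hy hyy, zero_mul]

lemma IsRelation.eq_zero_of_card_le [Finite σ] {c : ℙ K (σ → K) →₀ K} {n : ℕ}
    (hc : IsRelation n c) (hn : c.support.card ≤ n + 1) : c = 0 := by
  classical
  by_contra hc0
  obtain ⟨x, hx⟩ := Finsupp.support_nonempty_iff.2 hc0
  obtain ⟨H, hH, hHx, hHy⟩ := exists_separating_form (Finset.notMem_erase x c.support) (n := n)
    (by rw [Finset.card_erase_of_mem hx]; lia)
  have hsum := hc H hH
  rw [Finsupp.sum, Finset.sum_eq_single_of_mem x hx fun y hy hyx ↦ by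
    rw [hHy y (Finset.mem_erase.2 ⟨hyx, hy⟩), mul_zero]] at hsum
  exact mul_ne_zero (Finsupp.mem_support_iff.1 hx) hHx hsum

end Relations

section CompleteIntersection

open Projectivization Matrix
open scoped LinearAlgebra.Projectivization

variable {K : Type*} [Field K] {F G : MvPolynomial (Fin 3) K} {a b d : ℕ}
  {c : ℙ K (Fin 3 → K) →₀ K} {p q : Fin 3 → K}

lemma IsRelation.inv_linearForm_smul (hF : F.IsHomogeneous a) (hG : G.IsHomogeneous b)
    (hpq : p ⨯₃ q ≠ 0) (hp : eval p F ≠ 0)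
    (hcop : IsCoprime (restrictLine p q F) (restrictLine p q G))
    (hab : a + b ≤ d + 2) (ha : a ≤ d + 1) (hb : b ≤ d + 1)
    (hcF : ∀ x ∈ c.support, eval x.rep F = 0) (hcG : ∀ x ∈ c.support, eval x.rep G = 0)
    (hline : ∀ x ∈ c.support, eval x.rep (linearForm (p ⨯₃ q)) ≠ 0) (hc : IsRelation d c) :
    IsRelation (d + 1)
      ((fun x : ℙ K (Fin 3 → K) ↦ (eval x.rep (linearForm (p ⨯₃ q)))⁻¹) • c) := by
  intro H hH
  obtain ⟨A, B, L, hL, rfl⟩ :=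
    exists_eq_mul_add_mul_add_linearForm_mul hF hG hH hpq hp hcop hab ha hb
  rw [sum_smul_mul, ← hc L hL]
  refine Finsupp.sum_congr fun x hx ↦ ?_
  rw [map_add, map_add, map_mul, map_mul, map_mul, hcF x hx, hcG x hx, mul_zero, mul_zero,
    zero_add, zero_add, inv_mul_cancel_left₀ (hline x hx)]

-- Dividing the coefficients by the values of the linear form raises the degree of the relation and
-- keeps its support, until the degree is too large for the number of points.
lemma IsRelation.eq_zero_of_isCoprime_restrictLine (hF : F.IsHomogeneous a) (hG : G.IsHomogeneous b)
    (hpq : p ⨯₃ q ≠ 0) (hp : eval p F ≠ 0)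
    (hcop : IsCoprime (restrictLine p q F) (restrictLine p q G))
    (hab : a + b ≤ d + 2) (ha : a ≤ d + 1) (hb : b ≤ d + 1)
    (hcF : ∀ x ∈ c.support, eval x.rep F = 0) (hcG : ∀ x ∈ c.support, eval x.rep G = 0)
    (hline : ∀ x ∈ c.support, eval x.rep (linearForm (p ⨯₃ q)) ≠ 0) (hc : IsRelation d c) :
    c = 0 := by
  induction hk : c.support.card - (d + 1) generalizing d c with
  | zero => exact hc.eq_zero_of_card_le (Nat.sub_eq_zero_iff_le.1 hk)
  | succ k ih =>
    set f : ℙ K (Fin 3 → K) → K := fun x ↦ (eval x.rep (linearForm (p ⨯₃ q)))⁻¹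
    have hf (x) (hx : x ∈ c.support) : f x ≠ 0 := inv_ne_zero (hline x hx)
    have hsupp : (f • c).support = c.support := by
      ext x
      simp +contextual [hf]
    have hfc : f • c = 0 := by
      refine ih (d := d + 1) (by lia) (by lia) (by lia) ?_ ?_ ?_
        (hc.inv_linearForm_smul hF hG hpq hp hcop hab ha hb hcF hcG hline) ?_ <;> rw [hsupp]
      exacts [hcF, hcG, hline, by lia]
    rwa [← Finsupp.support_eq_empty, ← hsupp, Finsupp.support_eq_empty]

lemma isUnit_of_isHomogeneous_zero {σ : Type*} {F : MvPolynomial σ K} (hF : F.IsHomogeneous 0)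
    (hF0 : F ≠ 0) : IsUnit F := by
  have hC := totalDegree_eq_zero_iff_eq_C.1 ((totalDegree_zero_iff_isHomogeneous σ).2 hF)
  exact isUnit_iff_eq_C_of_isReduced.2 ⟨_, .mk0 _ fun h0 ↦ hF0 (by rw [hC, h0, C_0]), hC⟩

lemma pos_of_isHomogeneous_of_eval_eq_zero {σ : Type*} {F : MvPolynomial σ K} {n : ℕ}
    (hF : F.IsHomogeneous n) (hF0 : F ≠ 0) {v : σ → K} (hv : eval v F = 0) : 0 < n := by
  rw [Nat.pos_iff_ne_zero]
  rintro rfl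
  exact ((isUnit_of_isHomogeneous_zero hF hF0).map (eval v)).ne_zero hv

theorem IsRelation.eq_zero_of_isRelPrime [Infinite K] (hF : F.IsHomogeneous a)
    (hG : G.IsHomogeneous b) (hFG : IsRelPrime F G) (hab : a + b ≤ d + 2)
    (hcF : ∀ x ∈ c.support, eval x.rep F = 0) (hcG : ∀ x ∈ c.support, eval x.rep G = 0)
    (hc : IsRelation d c) : c = 0 := by
  classical
  by_contra hc0
  obtain ⟨x, hx⟩ := Finsupp.support_nonempty_iff.2 hc0
  have hF0 : F ≠ 0 := by
    rintro rfl
    exact ((isRelPrime_zero_left.1 hFG).map (eval x.rep)).ne_zero (hcG x hx)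
  have hG0 : G ≠ 0 := by
    rintro rfl
    exact ((isRelPrime_zero_right.1 hFG).map (eval x.rep)).ne_zero (hcF x hx)
  have ha := pos_of_isHomogeneous_of_eval_eq_zero hF hF0 (hcF x hx)
  have hb := pos_of_isHomogeneous_of_eval_eq_zero hG hG0 (hcG x hx)
  obtain ⟨p, hp⟩ : ∃ p, eval p F ≠ 0 := by
    contrapose! hF0
    exact funext fun p ↦ by rw [hF0 p, map_zero]
  obtain ⟨q, hcop, hline⟩ := exists_isCoprime_restrictLine_avoiding hF hFG hp
    (c.support.image fun x ↦ x.rep)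
    (by simpa using fun x hx ↦ ⟨x.rep_nonzero, hcF x (Finsupp.mem_support_iff.2 hx)⟩)
  rw [Finset.forall_mem_image] at hline
  have hpq : p ⨯₃ q ≠ 0 := fun h0 ↦ hline hx (by rw [eval_linearForm, h0, zero_dotProduct])
  exact hc0 (hc.eq_zero_of_isCoprime_restrictLine hF hG hpq hp hcop hab (by lia) (by lia)
    hcF hcG @hline)

end CompleteIntersection

section HilbertFunction

open Projectivization
open scoped LinearAlgebra.Projectivization

variable {σ K : Type*} [Field K]

/-- Evaluation of the forms of degree `k` at the chosen representatives of the points of `Γ`. -/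
def evalMap (Γ : Finset (ℙ K (σ → K))) (k : ℕ) : homogeneousSubmodule σ K k →ₗ[K] (Γ → K) :=
  LinearMap.pi fun x ↦ evalForm k x.1

/-- The Hilbert function of `Γ`: the number of conditions that `Γ` imposes on forms of degree
`k`. -/
def hilbertFunction (Γ : Finset (ℙ K (σ → K))) (k : ℕ) : ℕ :=
  Module.finrank K (LinearMap.range (evalMap Γ k))

lemma evalMap_apply (Γ : Finset (ℙ K (σ → K))) (k : ℕ) (F : homogeneousSubmodule σ K k) (x : Γ) :
    evalMap Γ k F x = eval x.1.rep F.1 :=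
  evalForm_apply x.1 F

lemma mem_ker_evalMap {Γ : Finset (ℙ K (σ → K))} {k : ℕ} {F : homogeneousSubmodule σ K k} :
    F ∈ LinearMap.ker (evalMap Γ k) ↔ ∀ x ∈ Γ, eval x.rep F.1 = 0 := by
  simp [LinearMap.mem_ker, funext_iff, evalMap_apply]

lemma hilbertFunction_le_card (Γ : Finset (ℙ K (σ → K))) (k : ℕ) :
    hilbertFunction Γ k ≤ Γ.card :=
  (Submodule.finrank_le _).trans_eq (by simp)

lemma IsRelation.hilbertFunction_add_le_card {c : ℙ K (σ → K) →₀ K} {k l : ℕ}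
    (hc : IsRelation (k + l) c) :
    hilbertFunction c.support k + hilbertFunction c.support l ≤ c.support.card := by
  classical
  let B : LinearMap.BilinForm K (c.support → K) :=
    Matrix.toBilin' (Matrix.diagonal fun x : c.support ↦ c x)
  have hB_apply (u w : c.support → K) : B u w = ∑ x : c.support, c x * (u x * w x) := by
    simp only [B, Matrix.toBilin'_apply', Matrix.mulVec_diagonal, dotProduct, mul_left_comm]
  have hB : B.Nondegenerate := by
    refine LinearMap.BilinForm.nondegenerate_toBilin'_of_det_ne_zero' _ ?_
    rw [Matrix.det_diagonal, Finset.prod_ne_zero_iff]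
    exact fun x _ ↦ Finsupp.mem_support_iff.1 x.2
  have hle : LinearMap.range (evalMap c.support k) ≤
      B.orthogonal (LinearMap.range (evalMap c.support l)) := by
    rintro _ ⟨F, rfl⟩ _ ⟨G, rfl⟩
    rw [hB_apply, ← hc _ (F.2.mul G.2), Finsupp.sum, ← Finset.sum_coe_sort c.support]
    simp only [evalMap_apply, map_mul, mul_comm]
  have h := Submodule.finrank_mono hle
  rw [LinearMap.BilinForm.finrank_orthogonal hB, Module.finrank_fintype_fun_eq_card,
    Fintype.card_coe] at h
  exact Nat.add_le_of_le_sub (hilbertFunction_le_card _ l) h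

lemma finrank_homogeneousSubmodule [Fintype σ] (k : ℕ) :
    Module.finrank K (homogeneousSubmodule σ K k) =
      (Fintype.card σ + k - 1).choose k := by
  classical
  have hdegree : {u : σ →₀ ℕ | u.degree = k} =
      (Finset.univ : Finset σ).finsuppAntidiag k := by
    ext u
    simp [Finset.mem_finsuppAntidiag, Finsupp.degree_eq_sum]
  rw [homogeneousSubmodule_eq_finsupp_supported, hdegree,
    (AddMonoidAlgebra.supportedEquivFinsupp _).finrank_eq, Module.finrank_finsupp_self]
  simp only [Finset.coe_sort_coe, Fintype.card_coe, Finset.card_finsuppAntidiag_nat_eq_choose,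
    Finset.card_univ]

lemma finrank_homogeneousSubmodule_fin_three (k : ℕ) :
    Module.finrank K (homogeneousSubmodule (Fin 3) K k) = (k + 2).choose 2 := by
  rw [finrank_homogeneousSubmodule, Fintype.card_fin, show 3 + k - 1 = k + 2 by lia,
    Nat.choose_symm_add]

lemma hilbertFunction_add_finrank_ker [Finite σ] (Γ : Finset (ℙ K (σ → K))) (k : ℕ) :
    hilbertFunction Γ k + Module.finrank K (LinearMap.ker (evalMap Γ k)) =
      Module.finrank K (homogeneousSubmodule σ K k) :=
  have : Module.Finite K (homogeneousSubmodule σ K k) :=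
    Module.Finite.iff_fg.2 (homogeneousSubmodule_fg σ K k)
  (evalMap Γ k).finrank_range_add_finrank_ker

lemma hilbertFunction_eq_of_forall_eq_zero {Γ : Finset (ℙ K (Fin 3 → K))} {k : ℕ}
    (h : ∀ F : MvPolynomial (Fin 3) K, F.IsHomogeneous k → (∀ x ∈ Γ, eval x.rep F = 0) → F = 0) :
    hilbertFunction Γ k = (k + 2).choose 2 := by
  have hker : LinearMap.ker (evalMap Γ k) = ⊥ :=
    (Submodule.eq_bot_iff _).2 fun F hF ↦ Subtype.ext (h F.1 F.2 (mem_ker_evalMap.1 hF))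
  rw [← finrank_homogeneousSubmodule_fin_three (K := K), ← hilbertFunction_add_finrank_ker Γ, hker,
    finrank_bot, add_zero]

lemma choose_two_le_hilbertFunction_add_of_forall_dvd {Γ : Finset (ℙ K (Fin 3 → K))}
    {F : MvPolynomial (Fin 3) K} {t l : ℕ} (hF : F.IsHomogeneous t)
    (h : ∀ G : MvPolynomial (Fin 3) K, G.IsHomogeneous (t + l) → (∀ x ∈ Γ, eval x.rep G = 0) →
      F ∣ G) :
    (t + l + 2).choose 2 ≤ hilbertFunction Γ (t + l) + (l + 2).choose 2 := by
  have hle : (LinearMap.ker (evalMap Γ (t + l))).map (Submodule.subtype _) ≤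
      (homogeneousSubmodule (Fin 3) K l).map (LinearMap.mulLeft K F) := by
    rintro _ ⟨G, hG, rfl⟩
    obtain ⟨L, hL, hGL⟩ :=
      exists_isHomogeneous_of_dvd hF G.2 (h G.1 G.2 (mem_ker_evalMap.1 hG))
    exact ⟨L, hL, hGL.symm⟩
  have : Module.Finite K (homogeneousSubmodule (Fin 3) K l) :=
    Module.Finite.iff_fg.2 (homogeneousSubmodule_fg (Fin 3) K l)
  have hker := (Submodule.finrank_mono hle).trans (Submodule.finrank_map_le _ _)
  rw [Submodule.finrank_map_subtype_eq, finrank_homogeneousSubmodule_fin_three] at hker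
  rw [← finrank_homogeneousSubmodule_fin_three (K := K), ← hilbertFunction_add_finrank_ker Γ]
  exact Nat.add_le_add_left hker _

end HilbertFunction

section MinimalCurve

open Projectivization
open scoped LinearAlgebra.Projectivization

variable {K : Type*} [Field K] {F G : MvPolynomial (Fin 3) K} {d k t : ℕ}
  {c : ℙ K (Fin 3 → K) →₀ K}

lemma IsRelation.dvd_of_minimal [Infinite K] (hc : IsRelation d c) (hF : F.IsHomogeneous t)
    (hF0 : F ≠ 0) (hG : G.IsHomogeneous k) (htk : t + k = d + 1)
    (hcF : ∀ x ∈ c.support, eval x.rep F = 0) (hcG : ∀ x ∈ c.support, eval x.rep G = 0)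
    (hmin : ∀ e < t, ∀ D : MvPolynomial (Fin 3) K, D.IsHomogeneous e →
      (∀ x ∈ c.support, eval x.rep D = 0) → D = 0) :
    F ∣ G := by
  rcases eq_or_ne G 0 with rfl | hG0
  · exact dvd_zero F
  obtain ⟨D, F', G', e, a, b, rfl, rfl, rfl, rfl, hD, hF', hG', hrel⟩ :=
    exists_isRelPrime_of_isHomogeneous hF hG hF0 hG0
  rcases a.eq_zero_or_pos with rfl | ha
  · exact mul_dvd_mul_left D
      (isUnit_of_isHomogeneous_zero hF' (right_ne_zero_of_mul hF0)).dvd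
  have hzero : (fun x : ℙ K (Fin 3 → K) ↦ eval x.rep D) • c = 0 := by
    have hc' : IsRelation (e + (d - e)) c := by rwa [Nat.add_sub_cancel' (by lia)]
    refine (hc'.eval_smul hD).eq_zero_of_isRelPrime hF' hG' hrel (by lia)
      (fun x hx ↦ ?_) (fun x hx ↦ ?_) <;>
      obtain ⟨hDx, hcx⟩ : eval x.rep D ≠ 0 ∧ c x ≠ 0 := by simpa using hx
    · simpa [hDx] using hcF x (Finsupp.mem_support_iff.2 hcx)
    · simpa [hDx] using hcG x (Finsupp.mem_support_iff.2 hcx)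
  refine absurd (hmin e (by lia) D hD fun x hx ↦ ?_) (left_ne_zero_of_mul hF0)
  exact (mul_eq_zero.1 (DFunLike.congr_fun hzero x)).resolve_right (Finsupp.mem_support_iff.1 hx)

lemma IsRelation.exists_isHomogeneous_le (hc : IsRelation d c) {m : ℕ}
    (hcard : c.support.card < (m + 2).choose 2 + (d + 2 - m).choose 2) (hm : d ≤ 2 * m) :
    ∃ t ≤ m, ∃ F : MvPolynomial (Fin 3) K, F ≠ 0 ∧ F.IsHomogeneous t ∧
      ∀ x ∈ c.support, eval x.rep F = 0 := by
  by_contra! hcurve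
  have hzero (k) (hk : k ≤ m) : hilbertFunction c.support k = (k + 2).choose 2 :=
    hilbertFunction_eq_of_forall_eq_zero fun F hF hcF ↦ by
      by_contra hF0
      obtain ⟨x, hx, hFx⟩ := hcurve k hk F hF0 hF
      exact hFx (hcF x hx)
  refine hcard.not_ge ?_
  rcases le_or_gt m d with hmd | hmd
  · obtain ⟨l, rfl⟩ := Nat.exists_eq_add_of_le hmd
    rw [show m + l + 2 - m = l + 2 by lia, ← hzero m le_rfl, ← hzero l (by lia)]
    exact hc.hilbertFunction_add_le_card
  · rw [Nat.choose_eq_zero_of_lt (show d + 2 - m < 2 by lia), add_zero, ← hzero m le_rfl]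
    exact hilbertFunction_le_card _ _

lemma choose_two_add_choose_two (t n : ℕ) :
    (t + 1).choose 2 + (t + n).choose 2 = n.choose 2 + t * (t + n) := by
  qify
  simp only [Nat.cast_choose_two, Nat.cast_add, Nat.cast_one]
  ring

lemma IsRelation.mul_le_card_of_minimal [Infinite K] (hc : IsRelation d c)
    (hF : F.IsHomogeneous t) (hF0 : F ≠ 0) (hcF : ∀ x ∈ c.support, eval x.rep F = 0)
    (hmin : ∀ e < t, ∀ D : MvPolynomial (Fin 3) K, D.IsHomogeneous e →
      (∀ x ∈ c.support, eval x.rep D = 0) → D = 0)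
    (ht : 0 < t) (htd : 2 * t ≤ d + 3) :
    t * (d + 3 - t) ≤ c.support.card := by
  obtain ⟨s, rfl⟩ := Nat.exists_eq_add_of_le' ht
  obtain ⟨k, rfl⟩ : ∃ k, d = s + k := ⟨d - s, by lia⟩
  obtain ⟨n, hn⟩ : ∃ n, k + 2 = s + 1 + n := ⟨k + 1 - s, by lia⟩
  have hs : hilbertFunction c.support s = (s + 2).choose 2 :=
    hilbertFunction_eq_of_forall_eq_zero (hmin s (by lia))
  have hk : (k + 2).choose 2 ≤ hilbertFunction c.support k + n.choose 2 := by
    rcases lt_or_ge k (s + 1) with hks | hks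
    · rw [hilbertFunction_eq_of_forall_eq_zero (hmin k hks)]
      exact Nat.le_add_right _ _
    · obtain ⟨l, rfl⟩ := Nat.exists_eq_add_of_le hks
      obtain rfl : n = l + 2 := by lia
      exact choose_two_le_hilbertFunction_add_of_forall_dvd hF fun G hG hcG ↦
        hc.dvd_of_minimal hF hF0 hG (by lia) hcF hcG hmin
  have hsum := hc.hilbertFunction_add_le_card
  have hbinom := choose_two_add_choose_two (s + 1) n
  rw [hn] at hk
  rw [show s + k + 3 - (s + 1) = s + 1 + n by lia]
  lia

lemma IsRelation.exists_isHomogeneous_mul_le_card [Infinite K] (hc : IsRelation d c)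
    (hc0 : c ≠ 0) {m : ℕ} (hm : 2 * m = d + 2 ∨ 2 * m = d + 3)
    (hcard : c.support.card < (m + 2).choose 2 + (d + 2 - m).choose 2) :
    ∃ t, 1 ≤ t ∧ 2 * t ≤ d + 3 ∧ ∃ F : MvPolynomial (Fin 3) K, F ≠ 0 ∧ F.IsHomogeneous t ∧
      (∀ x ∈ c.support, eval x.rep F = 0) ∧ t * (d + 3 - t) ≤ c.support.card := by
  classical
  have hex := hc.exists_isHomogeneous_le hcard (by lia)
  obtain ⟨htm, F, hF0, hF, hcF⟩ := Nat.find_spec hex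
  obtain ⟨x, hx⟩ := Finsupp.support_nonempty_iff.2 hc0
  have ht := pos_of_isHomogeneous_of_eval_eq_zero hF hF0 (hcF x hx)
  have htd : 2 * Nat.find hex ≤ d + 3 := by lia
  refine ⟨Nat.find hex, ht, htd, F, hF0, hF, hcF,
    hc.mul_le_card_of_minimal hF hF0 hcF (fun e he D hD hcD ↦ ?_) ht htd⟩
  by_contra hD0
  exact Nat.find_min hex he ⟨by lia, D, hD0, hD, hcD⟩

end MinimalCurve

section Separation

open Projectivization
open scoped LinearAlgebra.Projectivization

variable {K ι : Type*} [Field K]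

lemma exists_isRelation_of_forall_eval_eq_zero {σ : Type*} [Finite ι] {P : ι → ℙ K (σ → K)}
    {Q : ℙ K (σ → K)} {d : ℕ} (hQ : Q ∉ Set.range P)
    (h : ∀ F : MvPolynomial σ K, F.IsHomogeneous d → (∀ i, eval (P i).rep F = 0) →
      eval Q.rep F = 0) :
    ∃ c : ℙ K (σ → K) →₀ K, IsRelation d c ∧ Q ∈ c.support ∧
      (c.support : Set (ℙ K (σ → K))) ⊆ insert Q (Set.range P) := by
  classical
  have hspan : evalForm d Q ∈ Submodule.span K (evalForm d '' Set.range P) := by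
    rw [← Set.range_comp]
    refine mem_span_of_iInf_ker_le_ker fun F hF ↦ ?_
    simp only [Submodule.mem_iInf, LinearMap.mem_ker, Function.comp_apply, evalForm_apply] at hF ⊢
    exact h F.1 F.2 hF
  obtain ⟨l, hl, hlQ⟩ := (Finsupp.mem_span_image_iff_linearCombination K).1 hspan
  have hlQ0 : l Q = 0 := Finsupp.notMem_support_iff.1 fun hQl ↦ hQ (hl hQl)
  refine ⟨l - Finsupp.single Q 1, ?_, ?_, fun x hx ↦ ?_⟩
  · rw [isRelation_iff_linearCombination_evalForm_eq_zero, map_sub, hlQ,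
      Finsupp.linearCombination_single, one_smul, sub_self]
  · simp [hlQ0]
  · rcases eq_or_ne x Q with rfl | hxQ
    · exact Set.mem_insert _ _
    · refine Set.mem_insert_of_mem _ (hl ?_)
      simpa [hxQ.symm] using hx

lemma card_le_ncard_add_one_of_subset_insert_image {α : Type*} [Finite ι] {S : Finset α} {x : α}
    {f : ι → α} {I : Set ι} (hS : (S : Set α) ⊆ insert x (f '' I)) : S.card ≤ I.ncard + 1 := by
  calc S.card = (S : Set α).ncard := (Set.ncard_coe_finset S).symm
    _ ≤ (insert x (f '' I)).ncard := Set.ncard_le_ncard hS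
    _ ≤ (f '' I).ncard + 1 := Set.ncard_insert_le _ _
    _ ≤ I.ncard + 1 := Nat.add_le_add_right Set.ncard_image_le 1

lemma add_one_lt_choose_two_add_choose_two {s m n : ℕ} (hm : 0 < m) (hmn : n = m ∨ n + 1 = m)
    (hs : (s : ℤ) ≤ max (m * (n + 1) - 1 : ℤ) (m ^ 2)) :
    s + 1 < (m + 2).choose 2 + n.choose 2 := by
  qify at hs ⊢
  have hm' : (1 : ℚ) ≤ m := by exact_mod_cast hm
  simp only [Nat.cast_choose_two, Nat.cast_add, Nat.cast_ofNat]
  rcases hmn with rfl | rfl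
  · rw [max_eq_left (by linarith)] at hs
    linarith
  · rw [Nat.cast_succ, max_eq_right (by linarith)] at hs
    push_cast at hs ⊢
    linarith

theorem stmt_3_general [Infinite K] [Fintype ι] (P : ι → ℙ K (Fin 3 → K)) (d : ℕ)
    (hcard : (Fintype.card ι : ℤ) ≤
      max ((((d + 3) / 2 : ℕ) : ℤ) * ((d : ℤ) + 3 - (((d + 3) / 2 : ℕ) : ℤ)) - 1)
        ((((d + 3) / 2 : ℕ) : ℤ) ^ 2))
    (hcurve : ∀ t : ℕ, 1 ≤ t → 2 * t ≤ d + 3 →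
      ∀ C : MvPolynomial (Fin 3) K, C ≠ 0 → C.IsHomogeneous t →
        (({i | eval (P i).rep C = 0}).ncard : ℤ) ≤ (t : ℤ) * ((d : ℤ) + 3 - (t : ℤ)) - 2)
    (Q : ℙ K (Fin 3 → K)) (hQ : Q ∉ Set.range P) :
    ∃ F : MvPolynomial (Fin 3) K, F.IsHomogeneous d ∧
      (∀ i, eval (P i).rep F = 0) ∧ eval Q.rep F ≠ 0 := by
  by_contra! hsep
  obtain ⟨c, hc, hcQ, hcP⟩ := exists_isRelation_of_forall_eval_eq_zero hQ hsep
  have hcard_support : c.support.card ≤ Fintype.card ι + 1 := by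
    rw [← Nat.card_eq_fintype_card, ← Set.ncard_univ]
    exact card_le_ncard_add_one_of_subset_insert_image (by rwa [Set.image_univ])
  have hbound : c.support.card < ((d + 3) / 2 + 2).choose 2 + (d + 2 - (d + 3) / 2).choose 2 :=
    hcard_support.trans_lt <| add_one_lt_choose_two_add_choose_two (by lia) (by lia) <| by
      convert hcard using 4
      lia
  obtain ⟨t, ht, htd, F, hF0, hF, hcF, htc⟩ :=
    hc.exists_isHomogeneous_mul_le_card (Finsupp.support_nonempty_iff.1 ⟨Q, hcQ⟩) (by lia) hbound
  have hcard_curve : c.support.card ≤ {i | eval (P i).rep F = 0}.ncard + 1 := by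
    refine card_le_ncard_add_one_of_subset_insert_image (x := Q) (f := P) fun x hx ↦ ?_
    rcases hcP hx with rfl | ⟨i, rfl⟩
    · exact Set.mem_insert _ _
    · exact Set.mem_insert_of_mem _ ⟨i, hcF _ hx, rfl⟩
  have hcurveF := hcurve t ht htd F hF0 hF
  have hle : t * (d + 3 - t) ≤ {i | eval (P i).rep F = 0}.ncard + 1 := htc.trans hcard_curve
  zify [show t ≤ d + 3 by lia] at hle
  linarith

end Separation

theorem stmt_3 (s : ℕ) (Pt : Fin s → ProjPt 2) (hinj : Function.Injective Pt)
    (d : ℕ) (hd : 3 ≤ d)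
    (hcard : (s : ℤ) ≤
      max ((((d + 3) / 2 : ℕ) : ℤ) * ((d : ℤ) + 3 - (((d + 3) / 2 : ℕ) : ℤ)) - 1)
        ((((d + 3) / 2 : ℕ) : ℤ) ^ 2))
    (hcurve : ∀ t : ℕ, 1 ≤ t → 2 * t ≤ d + 3 →
      ∀ C : MvPolynomial (Fin 3) ℂ, C ≠ 0 → C.IsHomogeneous t →
        (({i : Fin s | VanishesAt C (Pt i)}).ncard : ℤ)
          ≤ (t : ℤ) * ((d : ℤ) + 3 - (t : ℤ)) - 2) :
    ∀ Q : ProjPt 2, Q ∉ Set.range Pt →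
      ∃ F : MvPolynomial (Fin 3) ℂ, F.IsHomogeneous d ∧
        (∀ i : Fin s, VanishesAt F (Pt i)) ∧ ¬ VanishesAt F Q := by
  exact stmt_3_general Pt d (by simpa using hcard) hcurve
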